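/- arXiv:2304.01952 — 2 statements merged into one kernel-verified Lean document; each statement's English description precedes it below -/
import Mathlib

section
/- Let α ∈ (0, 1/2] and let θ : ℝ → ℝ be a smooth 1-periodic function with ∫_0^1 θ(x) dx = 0. Then lim_{y → 0+} (1/y) U(y;θ) = 0; equivalently, since U(0;θ) = 0, the right derivative of U(·;θ) at y = 0 exists and equals 0. -/
open Real Filter

/-- The second component of the Weierstrass flow. -/
noncomputable def weierstrassU2 (α x y : ℝ) : ℝ :=
  ∑' k : ℕ, (2 : ℝ) ^ (-(α * (k : ℝ))) * Real.cos (2 ^ k * π * x) * Real.sin (2 ^ k * π * y)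

/-- `U(y;θ) = ∫_0^1 u₂(x,y)² θ(x) dx`. -/
noncomputable def weierstrassU (α : ℝ) (θ : ℝ → ℝ) (y : ℝ) : ℝ :=
  ∫ x in (0 : ℝ)..1, (weierstrassU2 α x y) ^ 2 * θ x

/-!
Expanding the square gives `U(y;θ) = ∑_{j,k} c_j(y) c_k(y) ∫_0^1 cos(2^j π x) cos(2^k π x) θ(x) dx`
with `c_k(y) = 2^{-αk} sin(2^k π y)`. By the product formula for cosines, the integrals are Fourier
coefficients of `θ` at the frequencies `(2^j ± 2^k)π`. The zero mean of `θ` removes the only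
resonance, `j = k`, and the other frequencies are at least of order `max(2^j, 2^k)`, so a single
integration by parts gains precisely the factor lost by differentiating `c_j c_k` in `y`. The series
can therefore be differentiated termwise, and every term has a double zero at `y = 0`.
-/

open MeasureTheory

section CosineIntegrals

variable {θ : ℝ → ℝ}

lemma abs_mul_abs_integral_cos_mul_le {a b ω : ℝ} (hab : a ≤ b)
    (hθ : AbsolutelyContinuousOnInterval θ a b) (ha : sin (ω * a) = 0) (hb : sin (ω * b) = 0) :
    |ω| * |∫ x in a..b, cos (ω * x) * θ x| ≤ ∫ x in a..b, |deriv θ x| := by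
  have hderiv : deriv (fun x ↦ sin (ω * x)) = fun x ↦ ω * cos (ω * x) := by
    ext x
    simpa [mul_comm] using ((hasDerivAt_id x).const_mul ω).sin.deriv
  have hsin : AbsolutelyContinuousOnInterval (fun x ↦ sin (ω * x)) a b :=
    ContDiffOn.absolutelyContinuousOnInterval (by fun_prop)
  have parts : ω * ∫ x in a..b, cos (ω * x) * θ x = -∫ x in a..b, deriv θ x * sin (ω * x) := by
    have h := hθ.integral_mul_deriv_eq_deriv_mul hsin
    rw [hderiv, ha, hb] at h
    simpa [← intervalIntegral.integral_const_mul, mul_comm, mul_left_comm] using h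
  rw [← abs_mul, parts, abs_neg]
  refine (intervalIntegral.abs_integral_le_integral_abs hab).trans ?_
  refine intervalIntegral.integral_mono_on hab ?_ hθ.intervalIntegrable_deriv.abs fun x _ ↦ ?_
  · exact (hθ.intervalIntegrable_deriv.mul_continuousOn (by fun_prop)).abs
  · rw [abs_mul]
    exact mul_le_of_le_one_right (abs_nonneg _) (abs_sin_le_one _)

lemma pi_mul_abs_mul_abs_integral_cos_int_mul_pi_le (hθ : AbsolutelyContinuousOnInterval θ 0 1)
    (m : ℤ) :
    π * |(m : ℝ)| * |∫ x in (0 : ℝ)..1, cos (m * π * x) * θ x| ≤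
      ∫ x in (0 : ℝ)..1, |deriv θ x| := by
  have h := abs_mul_abs_integral_cos_mul_le (ω := m * π) zero_le_one hθ (by simp)
    (by simp [sin_int_mul_pi])
  rwa [abs_mul, abs_of_pos pi_pos, mul_comm |(m : ℝ)|] at h

/-- The Gram matrix of the dyadic cosines `x ↦ cos (2 ^ k * π * x)` on `[0, 1]` for the (signed)
weight `θ`; its entries are the coefficients of the expansion of `U(y;θ)` as a double series. -/
noncomputable def dyadicCosGram (θ : ℝ → ℝ) (j k : ℕ) : ℝ :=
  ∫ x in (0 : ℝ)..1, cos (2 ^ j * π * x) * cos (2 ^ k * π * x) * θ x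

lemma dyadicCosGram_comm (θ : ℝ → ℝ) (j k : ℕ) : dyadicCosGram θ j k = dyadicCosGram θ k j := by
  simp only [dyadicCosGram, mul_comm (cos (2 ^ j * π * _))]

lemma two_mul_dyadicCosGram (hθ : IntervalIntegrable θ volume 0 1) (j k : ℕ) :
    2 * dyadicCosGram θ j k =
      (∫ x in (0 : ℝ)..1, cos (((2 ^ j - 2 ^ k : ℤ) : ℝ) * π * x) * θ x) +
        ∫ x in (0 : ℝ)..1, cos (((2 ^ j + 2 ^ k : ℤ) : ℝ) * π * x) * θ x := by
  rw [dyadicCosGram, ← intervalIntegral.integral_const_mul, ← intervalIntegral.integral_add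
    (hθ.continuousOn_mul (by fun_prop)) (hθ.continuousOn_mul (by fun_prop))]
  refine intervalIntegral.integral_congr fun x _ ↦ ?_
  have product_formula := two_mul_cos_mul_cos (2 ^ j * π * x) (2 ^ k * π * x)
  push_cast
  rw [sub_mul, sub_mul, add_mul, add_mul, ← add_mul, ← product_formula]
  ring

lemma two_pow_le_two_mul_abs_sub_two_pow {j k : ℕ} (hjk : j ≠ k) :
    (2 : ℝ) ^ j ≤ 2 * |(2 : ℝ) ^ j - 2 ^ k| := by
  have double_le {m n : ℕ} (h : m < n) : 2 * (2 : ℝ) ^ m ≤ 2 ^ n := by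
    rw [← pow_succ']
    exact pow_le_pow_right₀ one_le_two h
  have hj : (0 : ℝ) < 2 ^ j := by positivity
  rcases hjk.lt_or_gt with h | h
  · linarith [double_le h, neg_le_abs ((2 : ℝ) ^ j - 2 ^ k)]
  · linarith [double_le h, le_abs_self ((2 : ℝ) ^ j - 2 ^ k)]

lemma two_pow_mul_abs_dyadicCosGram_le (hθ : AbsolutelyContinuousOnInterval θ 0 1)
    (hmean : ∫ x in (0 : ℝ)..1, θ x = 0) (j k : ℕ) :
    2 ^ j * |dyadicCosGram θ j k| ≤ ∫ x in (0 : ℝ)..1, |deriv θ x| := by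
  set B := ∫ x in (0 : ℝ)..1, |deriv θ x|
  have gram_eq := two_mul_dyadicCosGram hθ.continuousOn.intervalIntegrable j k
  have diff_decay := pi_mul_abs_mul_abs_integral_cos_int_mul_pi_le hθ (2 ^ j - 2 ^ k)
  have sum_decay := pi_mul_abs_mul_abs_integral_cos_int_mul_pi_le hθ (2 ^ j + 2 ^ k)
  push_cast at gram_eq diff_decay sum_decay
  set D := ∫ x in (0 : ℝ)..1, cos ((2 ^ j - 2 ^ k) * π * x) * θ x with hD
  set S := ∫ x in (0 : ℝ)..1, cos ((2 ^ j + 2 ^ k) * π * x) * θ x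
  have diff_le : 2 ^ j * |D| ≤ B := by
    rcases eq_or_ne j k with rfl | hjk
    · have hD0 : D = 0 := by simp [hD, hmean]
      simpa [hD0] using sum_decay.trans' (by positivity)
    · refine diff_decay.trans' (mul_le_mul_of_nonneg_right ?_ (abs_nonneg D))
      calc (2 : ℝ) ^ j ≤ 2 * |(2 : ℝ) ^ j - 2 ^ k| := two_pow_le_two_mul_abs_sub_two_pow hjk
        _ ≤ π * |(2 : ℝ) ^ j - 2 ^ k| := by gcongr; exact two_le_pi
  have sum_le : 2 ^ j * |S| ≤ B := by
    refine sum_decay.trans' (mul_le_mul_of_nonneg_right ?_ (abs_nonneg S))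
    calc (2 : ℝ) ^ j ≤ 1 * |(2 : ℝ) ^ j + 2 ^ k| := by
          rw [one_mul, abs_of_pos (by positivity)]
          exact le_add_of_nonneg_right (by positivity)
      _ ≤ π * |(2 : ℝ) ^ j + 2 ^ k| := by gcongr; linarith [two_le_pi]
  have triangle : 2 * |dyadicCosGram θ j k| ≤ |D| + |S| := by
    simpa [← gram_eq, abs_mul] using abs_add_le D S
  have := mul_le_mul_of_nonneg_left triangle (by positivity : (0 : ℝ) ≤ 2 ^ j)
  linarith

end CosineIntegrals

section Modes

variable {α : ℝ}

lemma summable_two_rpow_neg_mul_natCast (hα : 0 < α) :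
    Summable fun k : ℕ ↦ (2 : ℝ) ^ (-(α * (k : ℝ))) := by
  simp only [← neg_mul, rpow_mul_natCast zero_le_two]
  exact summable_geometric_of_lt_one (by positivity)
    (rpow_lt_one_of_one_lt_of_neg one_lt_two (neg_neg_of_pos hα))

lemma summable_prod_two_rpow_neg_mul_natCast (hα : 0 < α) :
    Summable fun p : ℕ × ℕ ↦ (2 : ℝ) ^ (-(α * (p.1 : ℝ))) * 2 ^ (-(α * (p.2 : ℝ))) := by
  have h := summable_two_rpow_neg_mul_natCast hα
  exact h.mul_of_nonneg h (fun _ ↦ by positivity) fun _ ↦ by positivity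

/-- The coefficient of `cos (2 ^ k * π * x)` in the series defining `u₂(x,y)`. -/
noncomputable def weierstrassMode (α : ℝ) (k : ℕ) (y : ℝ) : ℝ :=
  2 ^ (-(α * (k : ℝ))) * sin (2 ^ k * π * y)

lemma weierstrassMode_zero_right (α : ℝ) (k : ℕ) : weierstrassMode α k 0 = 0 := by
  simp [weierstrassMode]

lemma differentiable_weierstrassMode (α : ℝ) (k : ℕ) : Differentiable ℝ (weierstrassMode α k) := by
  unfold weierstrassMode
  fun_prop

lemma abs_weierstrassMode_le (α : ℝ) (k : ℕ) (y : ℝ) :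
    |weierstrassMode α k y| ≤ 2 ^ (-(α * (k : ℝ))) := by
  rw [weierstrassMode, abs_mul, abs_of_pos (by positivity)]
  exact mul_le_of_le_one_right (by positivity) (abs_sin_le_one _)

lemma abs_deriv_weierstrassMode_le (α : ℝ) (k : ℕ) (y : ℝ) :
    |deriv (weierstrassMode α k) y| ≤ 2 ^ k * π * 2 ^ (-(α * (k : ℝ))) := by
  have h : deriv (weierstrassMode α k) y =
      2 ^ k * π * 2 ^ (-(α * (k : ℝ))) * cos (2 ^ k * π * y) := by
    refine ((((hasDerivAt_id y).const_mul (2 ^ k * π)).sin.const_mul _).congr_deriv ?_).deriv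
    simp only [id_eq]
    ring
  rw [h, abs_mul, abs_of_pos (by positivity)]
  exact mul_le_of_le_one_right (by positivity) (abs_cos_le_one _)

lemma abs_weierstrassMode_mul_cos_le (α : ℝ) (k : ℕ) (x y : ℝ) :
    |weierstrassMode α k y * cos (2 ^ k * π * x)| ≤ 2 ^ (-(α * (k : ℝ))) := by
  rw [abs_mul]
  exact (mul_le_of_le_one_right (abs_nonneg _) (abs_cos_le_one _)).trans
    (abs_weierstrassMode_le α k y)

lemma hasSum_weierstrassU2 (hα : 0 < α) (x y : ℝ) :
    HasSum (fun k ↦ weierstrassMode α k y * cos (2 ^ k * π * x)) (weierstrassU2 α x y) := by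
  have hsum : Summable fun k ↦ weierstrassMode α k y * cos (2 ^ k * π * x) :=
    (summable_two_rpow_neg_mul_natCast hα).of_norm_bounded fun k ↦
      abs_weierstrassMode_mul_cos_le α k x y
  simpa only [weierstrassU2, weierstrassMode, mul_right_comm] using hsum.hasSum

lemma hasSum_weierstrassU {θ : ℝ → ℝ} (hα : 0 < α) (hθ : IntervalIntegrable θ volume 0 1) (y : ℝ) :
    HasSum (fun p : ℕ × ℕ ↦
      weierstrassMode α p.1 y * weierstrassMode α p.2 y * dyadicCosGram θ p.1 p.2)
      (weierstrassU α θ y) := by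
  set a : ℕ → ℝ := fun k ↦ 2 ^ (-(α * (k : ℝ)))
  set u : ℕ → ℝ → ℝ := fun k x ↦ weierstrassMode α k y * cos (2 ^ k * π * x)
  have u_le (k : ℕ) (x : ℝ) : |u k x| ≤ a k := abs_weierstrassMode_mul_cos_le α k x y
  have uu_le (p : ℕ × ℕ) (x : ℝ) : |u p.1 x * u p.2 x| ≤ a p.1 * a p.2 := by
    rw [abs_mul]
    exact mul_le_mul (u_le _ _) (u_le _ _) (abs_nonneg _) ((abs_nonneg _).trans (u_le p.1 x))
  have aa_summable : Summable fun p : ℕ × ℕ ↦ a p.1 * a p.2 :=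
    summable_prod_two_rpow_neg_mul_natCast hα
  have integral_term (p : ℕ × ℕ) : ∫ x in (0 : ℝ)..1, u p.1 x * u p.2 x * θ x =
      weierstrassMode α p.1 y * weierstrassMode α p.2 y * dyadicCosGram θ p.1 p.2 := by
    rw [dyadicCosGram, ← intervalIntegral.integral_const_mul]
    refine intervalIntegral.integral_congr fun x _ ↦ ?_
    simp only [u]
    ring
  simp only [← integral_term]
  refine intervalIntegral.hasSum_integral_of_dominated_convergence
    (fun p x ↦ a p.1 * a p.2 * |θ x|) (fun p ↦ ?_) (fun p ↦ .of_forall fun x _ ↦ ?_)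
    (.of_forall fun x _ ↦ aa_summable.mul_right _) ?_ (.of_forall fun x _ ↦ ?_)
  · exact (hθ.continuousOn_mul (by fun_prop)).aestronglyMeasurable_restrict_uIoc
  · rw [norm_eq_abs, abs_mul]
    exact mul_le_mul_of_nonneg_right (uu_le p x) (abs_nonneg _)
  · simp only [tsum_mul_right]
    exact hθ.abs.const_mul _
  · have hu : HasSum (u · x) (weierstrassU2 α x y) := hasSum_weierstrassU2 hα x y
    rw [sq]
    exact (hu.mul hu (aa_summable.of_norm_bounded fun p ↦ uu_le p x)).mul_right _

end Modes

section Derivative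

variable {α : ℝ} {θ : ℝ → ℝ}

lemma abs_deriv_weierstrassMode_mul_mul_dyadicCosGram_le (hθ : AbsolutelyContinuousOnInterval θ 0 1)
    (hmean : ∫ x in (0 : ℝ)..1, θ x = 0) (α : ℝ) (j k : ℕ) (y : ℝ) :
    |deriv (weierstrassMode α j) y * weierstrassMode α k y * dyadicCosGram θ j k| ≤
      π * (∫ x in (0 : ℝ)..1, |deriv θ x|) *
        (2 ^ (-(α * (j : ℝ))) * 2 ^ (-(α * (k : ℝ)))) := by
  rw [abs_mul, abs_mul]
  calc |deriv (weierstrassMode α j) y| * |weierstrassMode α k y| * |dyadicCosGram θ j k|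
      ≤ (2 ^ j * π * 2 ^ (-(α * (j : ℝ)))) * 2 ^ (-(α * (k : ℝ))) * |dyadicCosGram θ j k| := by
        gcongr
        · exact abs_deriv_weierstrassMode_le α j y
        · exact abs_weierstrassMode_le α k y
    _ = π * (2 ^ j * |dyadicCosGram θ j k|) * (2 ^ (-(α * (j : ℝ))) * 2 ^ (-(α * (k : ℝ)))) := by
        ring
    _ ≤ _ := by
        gcongr
        exact two_pow_mul_abs_dyadicCosGram_le hθ hmean j k

theorem hasDerivAt_weierstrassU (hα : 0 < α) (hθ : AbsolutelyContinuousOnInterval θ 0 1)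
    (hmean : ∫ x in (0 : ℝ)..1, θ x = 0) (y : ℝ) :
    HasDerivAt (weierstrassU α θ)
      (∑' p : ℕ × ℕ, (deriv (weierstrassMode α p.1) y * weierstrassMode α p.2 y +
        weierstrassMode α p.1 y * deriv (weierstrassMode α p.2) y) *
          dyadicCosGram θ p.1 p.2) y := by
  have expansion := hasSum_weierstrassU hα (hθ.continuousOn.intervalIntegrable (μ := volume))
  have term_deriv (p : ℕ × ℕ) (z : ℝ) : HasDerivAt
      (fun z ↦ weierstrassMode α p.1 z * weierstrassMode α p.2 z * dyadicCosGram θ p.1 p.2)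
      ((deriv (weierstrassMode α p.1) z * weierstrassMode α p.2 z +
        weierstrassMode α p.1 z * deriv (weierstrassMode α p.2) z) * dyadicCosGram θ p.1 p.2) z :=
    ((differentiable_weierstrassMode α p.1 z).hasDerivAt.mul
      (differentiable_weierstrassMode α p.2 z).hasDerivAt).mul_const _
  have term_deriv_le (p : ℕ × ℕ) (z : ℝ) :
      ‖(deriv (weierstrassMode α p.1) z * weierstrassMode α p.2 z +
        weierstrassMode α p.1 z * deriv (weierstrassMode α p.2) z) * dyadicCosGram θ p.1 p.2‖ ≤
      2 * (π * ∫ x in (0 : ℝ)..1, |deriv θ x|) *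
        (2 ^ (-(α * (p.1 : ℝ))) * 2 ^ (-(α * (p.2 : ℝ)))) := by
    have left := abs_deriv_weierstrassMode_mul_mul_dyadicCosGram_le hθ hmean α p.1 p.2 z
    have right := abs_deriv_weierstrassMode_mul_mul_dyadicCosGram_le hθ hmean α p.2 p.1 z
    rw [dyadicCosGram_comm, mul_comm (deriv _ _)] at right
    rw [norm_eq_abs, add_mul]
    exact (abs_add_le _ _).trans (by linarith)
  have bound_summable := (summable_prod_two_rpow_neg_mul_natCast hα).mul_left
    (2 * (π * ∫ x in (0 : ℝ)..1, |deriv θ x|))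
  exact (hasDerivAt_tsum bound_summable term_deriv term_deriv_le (expansion 0).summable
    y).congr_of_eventuallyEq (.of_forall fun z ↦ (expansion z).tsum_eq.symm)

lemma weierstrassU_zero_right (α : ℝ) (θ : ℝ → ℝ) : weierstrassU α θ 0 = 0 := by
  simp [weierstrassU, weierstrassU2]

theorem weierstrassU_zeroMean_rightDeriv_general (hα : 0 < α)
    (hθ : AbsolutelyContinuousOnInterval θ 0 1) (hmean : ∫ x in (0 : ℝ)..1, θ x = 0) :
    HasDerivAt (weierstrassU α θ) 0 0 := by
  simpa [weierstrassMode_zero_right] using hasDerivAt_weierstrassU hα hθ hmean 0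

end Derivative

/-- For `α ∈ (0,1/2]` and a smooth `1`-periodic `θ` with zero mean, the right derivative of
`U(·;θ)` at `y = 0` exists and equals `0`: `lim_{y→0+} U(y;θ)/y = 0`. -/
theorem weierstrassU_zeroMean_rightDeriv (α : ℝ) (hα : α ∈ Set.Ioc (0 : ℝ) (1 / 2))
    (θ : ℝ → ℝ) (hθ : ContDiff ℝ (⊤ : ℕ∞) θ) (hper : Function.Periodic θ 1)
    (hmean : (∫ x in (0 : ℝ)..1, θ x) = 0) :
    Tendsto (fun y => weierstrassU α θ y / y) (nhdsWithin 0 (Set.Ioi 0)) (nhds 0) := by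
  simpa [weierstrassU_zero_right, div_eq_inv_mul] using (weierstrassU_zeroMean_rightDeriv_general
    hα.1 (hθ.of_le (by simp)).contDiffOn.absolutelyContinuousOnInterval
    hmean).tendsto_slope_zero_right
end

section
/- Let α = 1/2 and let θ : ℝ → ℝ be a smooth 1-periodic function with ∫_0^1 θ(x) dx ≠ 0. Then liminf_{n → ∞} 2^n |U(2^{−n};θ)| ≥ |∫_0^1 θ(x) dx|. Consequently, if the right derivative lim_{y → 0+} (1/y) U(y;θ) exists, it is nonzero. -/
open Real Filter

/-!
At `y = 2⁻ⁿ` the terms `k ≥ n` of the series for `u₂` vanish, and reversing the order of the others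
(`k = n - 1 - j`) gives `2 ^ (αn) u₂(x, 2⁻ⁿ) = ∑ j < n, aⱼ cos (2ⁿ ωⱼ x)`, where
`ωⱼ = π / 2 ^ (j + 1)` and `aⱼ = 2 ^ (α(j + 1)) sin ωⱼ` do not depend on `n`, and `aⱼ` is summable
since `α < 1`. By the Riemann–Lebesgue lemma, distinct frequencies become orthogonal with respect
to `θ(x) dx` as `n → ∞`, so `2 ^ (2αn) U(2⁻ⁿ; θ)` converges to `(∑ aⱼ² / 2) ∫ θ`. The term `j = 0`
alone contributes `2 ^ (2α - 1) ∫ θ`, which is `∫ θ` for `α = 1/2`.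
-/

open MeasureTheory Topology
open scoped FourierTransform

section Summation

lemma tsum_indicator_diagonal {ι M : Type*} [AddCommMonoid M] [TopologicalSpace M]
    (F : ι × ι → M) : ∑' p, (Set.diagonal ι).indicator F p = ∑' i, F (i, i) := by
  have hinj : Function.Injective fun i : ι ↦ (i, i) := fun i j h ↦ congrArg Prod.fst h
  rw [← hinj.tsum_eq]
  · simp
  · rw [Set.support_indicator]
    exact fun p hp ↦ ⟨p.1, Prod.ext rfl hp.1⟩

lemma tendsto_sum_of_dominated_convergence {γ β E : Type*} [NormedAddCommGroup E]
    [CompleteSpace E] {l : Filter γ} {F : γ → β → E} {g : β → E} {bound : β → ℝ}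
    {t : γ → Finset β} (hbound : Summable bound) (ht : ∀ b, ∀ᶠ c in l, b ∈ t c)
    (hlim : ∀ b, Tendsto (F · b) l (𝓝 (g b))) (hdom : ∀ᶠ c in l, ∀ b, ‖F c b‖ ≤ bound b) :
    Tendsto (fun c ↦ ∑ b ∈ t c, F c b) l (𝓝 (∑' b, g b)) := by
  simp only [fun c ↦ sum_eq_tsum_indicator (F c) (t c)]
  refine tendsto_tsum_of_dominated_convergence hbound (fun b ↦ (hlim b).congr' ?_) ?_
  · filter_upwards [ht b] with c hc
    exact (Set.indicator_of_mem (Finset.mem_coe.2 hc) _).symm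
  · filter_upwards [hdom] with c hc b
    exact (norm_indicator_le_norm_self _ _).trans (hc b)

end Summation

section Oscillation

variable {f : ℝ → ℝ}

lemma integrable_cos_mul (hf : Integrable f) (w : ℝ) :
    Integrable fun x ↦ cos (w * x) * f x :=
  hf.bdd_mul (c := 1) (by fun_prop) (.of_forall fun x ↦ abs_cos_le_one (w * x))

lemma integrable_cos_mul_cos_mul (hf : Integrable f) (w w' : ℝ) :
    Integrable fun x ↦ cos (w * x) * cos (w' * x) * f x := by
  simpa only [mul_assoc] using integrable_cos_mul (integrable_cos_mul hf w') w

lemma tendsto_integral_cos_mul_cocompact (hf : Integrable f) :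
    Tendsto (fun w ↦ ∫ x, cos (w * x) * f x) (cocompact ℝ) (𝓝 0) := by
  have hscale : Tendsto (fun w : ℝ ↦ w * (2 * π)⁻¹) (cocompact ℝ) (cocompact ℝ) :=
    tendsto_cocompact_mul_right₀ (by positivity)
  have hexp := (Real.tendsto_integral_exp_smul_cocompact fun x ↦ (f x : ℂ)).comp hscale
  have hre := (Complex.continuous_re.tendsto 0).comp hexp
  refine hre.congr fun w ↦ ?_
  have hint : Integrable fun x ↦ 𝐞 (-(x * (w * (2 * π)⁻¹))) • (f x : ℂ) := by
    simpa [mul_comm] using (fourierIntegral_convergent_iff (w * (2 * π)⁻¹)).2 hf.ofReal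
  refine (Complex.reCLM.integral_comp_comm hint).symm.trans
    (integral_congr_ae (.of_forall fun x ↦ ?_))
  have hphase : 2 * π * (x * (w * (2 * π)⁻¹)) = w * x := by field_simp
  simp [-mul_inv_rev, Circle.smul_def, fourierChar_apply, Complex.exp_re, hphase]

lemma integral_cos_mul_cos_mul (hf : Integrable f) (w w' : ℝ) :
    ∫ x, cos (w * x) * cos (w' * x) * f x =
      ((∫ x, cos ((w - w') * x) * f x) + ∫ x, cos ((w + w') * x) * f x) / 2 := by
  rw [← integral_add (integrable_cos_mul hf _) (integrable_cos_mul hf _), ← integral_div]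
  congr 1 with x
  rw [← add_mul, sub_mul, add_mul w, ← two_mul_cos_mul_cos]
  ring

lemma abs_integral_cos_mul_cos_mul_le (hf : Integrable f) (w w' : ℝ) :
    |∫ x, cos (w * x) * cos (w' * x) * f x| ≤ ∫ x, |f x| := by
  refine norm_integral_le_of_norm_le (f := fun x ↦ cos (w * x) * cos (w' * x) * f x) hf.abs
    (.of_forall fun x ↦ ?_)
  rw [norm_mul, norm_mul]
  exact mul_le_of_le_one_left (abs_nonneg _)
    (mul_le_one₀ (abs_cos_le_one _) (abs_nonneg _) (abs_cos_le_one _))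

variable {γ ι : Type*} {l : Filter γ} {Λ : γ → ℝ}

lemma tendsto_integral_cos_mul_of_ne_zero (hf : Integrable f) (hΛ : Tendsto Λ l (cocompact ℝ))
    {w : ℝ} (hw : w ≠ 0) : Tendsto (fun c ↦ ∫ x, cos (Λ c * w * x) * f x) l (𝓝 0) :=
  (tendsto_integral_cos_mul_cocompact hf).comp ((tendsto_cocompact_mul_right₀ hw).comp hΛ)

lemma tendsto_integral_cos_mul_cos_of_ne (hf : Integrable f) (hΛ : Tendsto Λ l (cocompact ℝ))
    {w w' : ℝ} (hsub : w ≠ w') (hadd : w + w' ≠ 0) :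
    Tendsto (fun c ↦ ∫ x, cos (Λ c * w * x) * cos (Λ c * w' * x) * f x) l (𝓝 0) := by
  simp only [integral_cos_mul_cos_mul hf, ← mul_sub, ← mul_add]
  simpa using ((tendsto_integral_cos_mul_of_ne_zero hf hΛ (sub_ne_zero.2 hsub)).add
    (tendsto_integral_cos_mul_of_ne_zero hf hΛ hadd)).div_const 2

lemma tendsto_integral_cos_mul_cos_self (hf : Integrable f) (hΛ : Tendsto Λ l (cocompact ℝ))
    {w : ℝ} (hw : w ≠ 0) :
    Tendsto (fun c ↦ ∫ x, cos (Λ c * w * x) * cos (Λ c * w * x) * f x) l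
      (𝓝 ((∫ x, f x) / 2)) := by
  simp only [integral_cos_mul_cos_mul hf, sub_self, zero_mul, cos_zero, one_mul, ← mul_add]
  simpa using ((tendsto_integral_cos_mul_of_ne_zero hf hΛ
    (w := w + w) (by simpa using hw)).const_add (∫ x, f x)).div_const 2

lemma integral_sum_cos_sq_mul (hf : Integrable f) (s : Finset ι) (a w : ι → ℝ) :
    ∫ x, (∑ i ∈ s, a i * cos (w i * x)) ^ 2 * f x =
      ∑ p ∈ s ×ˢ s, a p.1 * a p.2 * ∫ x, cos (w p.1 * x) * cos (w p.2 * x) * f x := by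
  simp only [← integral_const_mul]
  rw [← integral_finsetSum _ fun p _ ↦ (integrable_cos_mul_cos_mul hf _ _).const_mul _]
  congr 1 with x
  rw [sq, Finset.sum_mul_sum, ← Finset.sum_product', Finset.sum_mul]
  exact Finset.sum_congr rfl fun p _ ↦ by ring

theorem tendsto_integral_sum_cos_sq_mul (hf : Integrable f) {a w : ι → ℝ} (ha : Summable a)
    (hw_pos : ∀ i, 0 < w i) (hw_inj : Function.Injective w) (hΛ : Tendsto Λ l (cocompact ℝ))
    {s : γ → Finset ι} (hs : Tendsto s l atTop) :
    Tendsto (fun c ↦ ∫ x, (∑ i ∈ s c, a i * cos (Λ c * w i * x)) ^ 2 * f x) l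
      (𝓝 ((∑' i, a i ^ 2) / 2 * ∫ x, f x)) := by
  let I (c : γ) (p : ι × ι) : ℝ := ∫ x, cos (Λ c * w p.1 * x) * cos (Λ c * w p.2 * x) * f x
  have hlim (p : ι × ι) : Tendsto (fun c ↦ a p.1 * a p.2 * I c p) l
      (𝓝 ((Set.diagonal ι).indicator (fun p ↦ a p.1 * a p.2 * ((∫ x, f x) / 2)) p)) := by
    obtain ⟨i, j⟩ := p
    obtain rfl | hij := eq_or_ne i j
    · simpa using (tendsto_integral_cos_mul_cos_self hf hΛ (hw_pos i).ne').const_mul (a i * a i)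
    · simpa [hij] using (tendsto_integral_cos_mul_cos_of_ne hf hΛ (hw_inj.ne hij)
        (add_pos (hw_pos i) (hw_pos j)).ne').const_mul (a i * a j)
  have hmem (p : ι × ι) : ∀ᶠ c in l, p ∈ s c ×ˢ s c := by
    filter_upwards [hs.eventually_ge_atTop {p.1}, hs.eventually_ge_atTop {p.2}] with c h₁ h₂
    exact Finset.mem_product.2 ⟨Finset.singleton_subset_iff.1 h₁, Finset.singleton_subset_iff.1 h₂⟩
  have hbound : Summable fun p : ι × ι ↦ |a p.1| * |a p.2| * ∫ x, |f x| :=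
    (ha.abs.mul_of_nonneg ha.abs (fun _ ↦ abs_nonneg _) fun _ ↦ abs_nonneg _).mul_right _
  have hdom (c : γ) (p : ι × ι) : ‖a p.1 * a p.2 * I c p‖ ≤ |a p.1| * |a p.2| * ∫ x, |f x| := by
    rw [norm_mul, norm_mul]
    exact mul_le_mul_of_nonneg_left (abs_integral_cos_mul_cos_mul_le hf _ _) (by positivity)
  have hvalue : ∑' p, (Set.diagonal ι).indicator (fun p ↦ a p.1 * a p.2 * ((∫ x, f x) / 2)) p =
      (∑' i, a i ^ 2) / 2 * ∫ x, f x := by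
    rw [tsum_indicator_diagonal, tsum_mul_right]
    simp only [sq]
    ring
  simp only [integral_sum_cos_sq_mul hf, ← hvalue]
  exact tendsto_sum_of_dominated_convergence hbound hmem hlim (.of_forall hdom)

end Oscillation

section Dyadic

/-- The frequency `ωⱼ = π / 2 ^ (j + 1)`: the `j`-th frequency of `u₂(·, 2⁻ⁿ)`, counted downwards
from the highest one and divided by `2 ^ n`. -/
noncomputable def weierstrassFreq (j : ℕ) : ℝ := π / 2 ^ (j + 1)

/-- The amplitude `aⱼ = 2 ^ (α(j + 1)) sin ωⱼ` of the frequency `2 ^ n ωⱼ` in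
`2 ^ (αn) u₂(·, 2⁻ⁿ)`. -/
noncomputable def weierstrassCoeff (α : ℝ) (j : ℕ) : ℝ :=
  2 ^ (α * (j + 1)) * sin (weierstrassFreq j)

lemma weierstrassFreq_pos (j : ℕ) : 0 < weierstrassFreq j := by
  unfold weierstrassFreq
  positivity

lemma weierstrassFreq_injective : Function.Injective weierstrassFreq := fun i j h ↦ by
  have hpow : (2 : ℝ) ^ (i + 1) = 2 ^ (j + 1) := by
    unfold weierstrassFreq at h
    field_simp at h
    exact h.symm
  simpa using pow_right_injective₀ two_pos (by norm_num) hpow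

lemma two_pow_mul_weierstrassFreq (j k : ℕ) :
    2 ^ (k + (j + 1)) * weierstrassFreq j = 2 ^ k * π := by
  rw [weierstrassFreq, pow_add]
  field_simp

lemma abs_weierstrassCoeff_le (α : ℝ) (j : ℕ) :
    |weierstrassCoeff α j| ≤ π * ((2 : ℝ) ^ (α - 1)) ^ (j + 1) := by
  have hsin : |sin (weierstrassFreq j)| ≤ weierstrassFreq j :=
    abs_sin_le_abs.trans_eq (abs_of_pos (weierstrassFreq_pos j))
  calc |weierstrassCoeff α j|
      = 2 ^ (α * (j + 1)) * |sin (weierstrassFreq j)| := by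
        rw [weierstrassCoeff, abs_mul, abs_of_pos (by positivity)]
    _ ≤ 2 ^ (α * (j + 1)) * (π / 2 ^ (j + 1)) := by gcongr; exact hsin
    _ = π * ((2 : ℝ) ^ (α - 1)) ^ (j + 1) := by
        rw [rpow_sub_one two_ne_zero, div_pow, ← rpow_mul_natCast two_pos.le]
        push_cast
        ring

lemma summable_weierstrassCoeff {α : ℝ} (hα : α < 1) : Summable (weierstrassCoeff α) := by
  have hratio : (2 : ℝ) ^ (α - 1) < 1 := rpow_lt_one_of_one_lt_of_neg one_lt_two (by linarith)
  have hgeom : Summable fun j : ℕ ↦ ((2 : ℝ) ^ (α - 1)) ^ (j + 1) :=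
    (summable_nat_add_iff 1).2 (summable_geometric_of_lt_one (by positivity) hratio)
  exact .of_norm_bounded (hgeom.mul_left π) (abs_weierstrassCoeff_le α)

lemma weierstrassCoeff_zero (α : ℝ) : weierstrassCoeff α 0 = 2 ^ α := by
  simp [weierstrassCoeff, weierstrassFreq]

lemma two_rpow_le_tsum_weierstrassCoeff_sq {α : ℝ} (hα : α < 1) :
    (2 : ℝ) ^ (2 * α - 1) ≤ (∑' j, weierstrassCoeff α j ^ 2) / 2 := by
  have hsummable : Summable fun j ↦ weierstrassCoeff α j ^ 2 := by
    simpa only [sq] using (summable_weierstrassCoeff hα).norm.mul_tendsto_const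
      (summable_weierstrassCoeff hα).tendsto_cofinite_zero
  rw [rpow_sub_one two_ne_zero, mul_comm, rpow_mul two_pos.le, rpow_two, ← weierstrassCoeff_zero]
  gcongr
  exact hsummable.le_tsum 0 fun j _ ↦ sq_nonneg _

lemma weierstrassU2_two_rpow_neg (α x : ℝ) (n : ℕ) :
    weierstrassU2 α x (2 ^ (-(n : ℝ))) = 2 ^ (-(α * n)) *
      ∑ j ∈ Finset.range n, weierstrassCoeff α j * cos (2 ^ n * weierstrassFreq j * x) := by
  have hvanish (k : ℕ) (hk : k ∉ Finset.range n) :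
      (2 : ℝ) ^ (-(α * k)) * cos (2 ^ k * π * x) * sin (2 ^ k * π * 2 ^ (-(n : ℝ))) = 0 := by
    obtain ⟨m, rfl⟩ := Nat.exists_eq_add_of_le (Finset.mem_range.not.1 hk |> not_lt.1)
    have hphase : (2 : ℝ) ^ (n + m) * π * 2 ^ (-(n : ℝ)) = (2 ^ m : ℕ) * π := by
      rw [rpow_neg two_pos.le, rpow_natCast, pow_add]
      push_cast
      field_simp
    rw [hphase, sin_nat_mul_pi, mul_zero]
  rw [weierstrassU2, tsum_eq_sum hvanish, ← Finset.sum_range_reflect, Finset.mul_sum]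
  refine Finset.sum_congr rfl fun j hj ↦ ?_
  obtain ⟨k, rfl⟩ := Nat.exists_eq_add_of_le' (Finset.mem_range.1 hj)
  have hindex : k + (j + 1) - 1 - j = k := by omega
  have hphase : (2 : ℝ) ^ k * π * 2 ^ (-((k + (j + 1) : ℕ) : ℝ)) = weierstrassFreq j := by
    rw [← two_pow_mul_weierstrassFreq j k, rpow_neg two_pos.le, rpow_natCast]
    field_simp
  have hamplitude : (2 : ℝ) ^ (-(α * k)) =
      2 ^ (-(α * (k + (j + 1) : ℕ))) * 2 ^ (α * (j + 1)) := by
    rw [← rpow_add two_pos]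
    push_cast
    ring_nf
  rw [Nat.succ_eq_add_one, hindex, hphase, hamplitude, two_pow_mul_weierstrassFreq,
    weierstrassCoeff]
  ring

lemma two_rpow_mul_weierstrassU_two_rpow_neg (α : ℝ) (θ : ℝ → ℝ) (n : ℕ) :
    2 ^ (2 * α * n) * weierstrassU α θ (2 ^ (-(n : ℝ))) =
      ∫ x, (∑ j ∈ Finset.range n,
        weierstrassCoeff α j * cos (2 ^ n * weierstrassFreq j * x)) ^ 2 *
          (Set.Ioc 0 1).indicator θ x := by
  have hscale : (2 : ℝ) ^ (2 * α * n) * (2 ^ (-(α * n))) ^ 2 = 1 := by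
    have hexponent : 2 * α * n + -(α * n) * (2 : ℕ) = 0 := by push_cast; ring
    rw [← rpow_mul_natCast two_pos.le, ← rpow_add two_pos, hexponent, rpow_zero]
  simp only [weierstrassU, weierstrassU2_two_rpow_neg, mul_pow]
  rw [intervalIntegral.integral_of_le zero_le_one, ← integral_const_mul,
    ← integral_indicator measurableSet_Ioc]
  congr 1 with x
  simp only [Set.indicator_mul_right]
  rw [← mul_assoc, ← mul_assoc, hscale, one_mul]

lemma tendsto_two_rpow_neg_nhdsGT_zero :
    Tendsto (fun n : ℕ ↦ (2 : ℝ) ^ (-(n : ℝ))) atTop (𝓝[>] 0) := by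
  simp only [rpow_neg two_pos.le, rpow_natCast]
  exact tendsto_inv_atTop_nhdsGT_zero.comp (tendsto_pow_atTop_atTop_of_one_lt one_lt_two)

variable {α : ℝ} {θ : ℝ → ℝ}

theorem tendsto_two_rpow_mul_weierstrassU (hα : α < 1) (hθ : IntervalIntegrable θ volume 0 1) :
    Tendsto (fun n : ℕ ↦ 2 ^ (2 * α * n) * weierstrassU α θ (2 ^ (-(n : ℝ)))) atTop
      (𝓝 ((∑' j, weierstrassCoeff α j ^ 2) / 2 * ∫ x in (0 : ℝ)..1, θ x)) := by
  have hΛ : Tendsto (fun n : ℕ ↦ (2 : ℝ) ^ n) atTop (cocompact ℝ) :=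
    (tendsto_pow_atTop_atTop_of_one_lt one_lt_two).mono_right atTop_le_cocompact
  have hint : Integrable ((Set.Ioc 0 1).indicator θ) :=
    (integrable_indicator_iff measurableSet_Ioc).2 hθ.1
  simp only [two_rpow_mul_weierstrassU_two_rpow_neg]
  rw [intervalIntegral.integral_of_le zero_le_one, ← integral_indicator measurableSet_Ioc]
  exact tendsto_integral_sum_cos_sq_mul hint (summable_weierstrassCoeff hα) weierstrassFreq_pos
    weierstrassFreq_injective hΛ tendsto_finset_range

theorem two_rpow_mul_abs_integral_le_liminf_weierstrassU (hα : α < 1)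
    (hθ : IntervalIntegrable θ volume 0 1) :
    2 ^ (2 * α - 1) * |∫ x in (0 : ℝ)..1, θ x| ≤
      liminf (fun n : ℕ ↦ 2 ^ (2 * α * n) * |weierstrassU α θ (2 ^ (-(n : ℝ)))|) atTop := by
  have hlim := (tendsto_two_rpow_mul_weierstrassU hα hθ).abs
  simp only [abs_mul, abs_of_pos (rpow_pos_of_pos two_pos _)] at hlim
  rw [hlim.liminf_eq]
  gcongr
  exact (two_rpow_le_tsum_weierstrassCoeff_sq hα).trans (le_abs_self _)

theorem ne_zero_of_tendsto_weierstrassU_div_rpow (hα : α < 1)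
    (hmean : (∫ x in (0 : ℝ)..1, θ x) ≠ 0) {L : ℝ}
    (hL : Tendsto (fun y ↦ weierstrassU α θ y / y ^ (2 * α)) (𝓝[>] 0) (𝓝 L)) : L ≠ 0 := by
  have hθ : IntervalIntegrable θ volume 0 1 :=
    intervalIntegral.intervalIntegrable_of_integral_ne_zero hmean
  have hdyadic := hL.comp tendsto_two_rpow_neg_nhdsGT_zero
  have hvalue : L = (∑' j, weierstrassCoeff α j ^ 2) / 2 * ∫ x in (0 : ℝ)..1, θ x := by
    refine tendsto_nhds_unique (hdyadic.congr fun n ↦ ?_) (tendsto_two_rpow_mul_weierstrassU hα hθ)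
    have hscale : ((2 : ℝ) ^ (-(n : ℝ))) ^ (2 * α) = (2 ^ (2 * α * n))⁻¹ := by
      rw [← rpow_mul two_pos.le, ← rpow_neg two_pos.le]
      ring_nf
    rw [Function.comp_apply, hscale, div_inv_eq_mul, mul_comm]
  have hpos : (0 : ℝ) < 2 ^ (2 * α - 1) := by positivity
  rw [hvalue]
  exact mul_ne_zero (hpos.trans_le (two_rpow_le_tsum_weierstrassCoeff_sq hα)).ne' hmean

end Dyadic

theorem weierstrassU_half_liminf_general {α : ℝ} (hα : α < 1) {θ : ℝ → ℝ}
    (hθ : IntervalIntegrable θ volume 0 1) :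
    2 ^ (2 * α - 1) * |∫ x in (0 : ℝ)..1, θ x| ≤
        liminf (fun n : ℕ ↦ 2 ^ (2 * α * n) * |weierstrassU α θ (2 ^ (-(n : ℝ)))|) atTop
    ∧ ((∫ x in (0 : ℝ)..1, θ x) ≠ 0 → ∀ L : ℝ,
        Tendsto (fun y ↦ weierstrassU α θ y / y ^ (2 * α)) (𝓝[>] 0) (𝓝 L) → L ≠ 0) :=
  ⟨two_rpow_mul_abs_integral_le_liminf_weierstrassU hα hθ,
    fun hmean _ ↦ ne_zero_of_tendsto_weierstrassU_div_rpow hα hmean⟩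

/-- For `α = 1/2` and a smooth `1`-periodic `θ` with nonzero mean,
`liminf_{n→∞} 2^n |U(2^{−n};θ)| ≥ |∫_0^1 θ|`; consequently, if the right derivative
`lim_{y→0+} U(y;θ)/y` exists, it is nonzero. -/
theorem weierstrassU_half_liminf (θ : ℝ → ℝ) (hθ : ContDiff ℝ (⊤ : ℕ∞) θ)
    (hper : Function.Periodic θ 1) (hmean : (∫ x in (0 : ℝ)..1, θ x) ≠ 0) :
    |∫ x in (0 : ℝ)..1, θ x| ≤
        Filter.liminf
          (fun n : ℕ => (2 : ℝ) ^ n * |weierstrassU (1 / 2) θ ((2 : ℝ) ^ (-(n : ℝ)))|) atTop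
    ∧ ∀ L : ℝ,
        Tendsto (fun y => weierstrassU (1 / 2) θ y / y) (nhdsWithin 0 (Set.Ioi 0)) (nhds L) →
          L ≠ 0 := by
  simpa [hmean] using weierstrassU_half_liminf_general one_half_lt_one
    (hθ.continuous.intervalIntegrable 0 1)
end
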